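/- For all p, q ≥ 0 with d := p + q, there exist real numbers r_0, …, r_d such that the vector field Y : ℍ² → ℍ², defined as the finite sum Y(z,w) := ∑_{n=0}^{d} ( (n/(n²+1)) • ((n•z + w)·(z - n•w)^d), (1/(n²+1)) • ((n•z + w)·(z - n•w)^d) ) · r_n (each summand being an overshear vector field in the real direction (n,1)), satisfies Div Y(z,w)[h] = h · S_{p,q}(z,w) for all z, w, h ∈ ℍ. -/

import Mathlib

open Finset

/-- The ordered product of `z`'s and `w`'s determined by the word `α ∈ {0,1}^d`:
the `i`-th factor is `z` if `α i = true` and `w` otherwise. -/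
noncomputable def wordProd {d : ℕ} (z w : Quaternion ℝ) (α : Fin d → Bool) : Quaternion ℝ :=
  (List.ofFn fun i => if α i then z else w).prod

/-- `S d p z w`: the sum of the monomials corresponding to all words of length `d`
with exactly `p` entries equal to `1`. -/
noncomputable def S (d p : ℕ) (z w : Quaternion ℝ) : Quaternion ℝ :=
  ∑ α ∈ univ.filter (fun α : Fin d → Bool => (univ.filter fun i => α i = true).card = p),
    wordProd z w α

/-!
The overshear field in the direction `(t, 1)` with profile `g` has divergence `h ↦ h * g (z - t w)`:
the divergence of a scalar multiple of a constant field is a derivative along that field, and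
`g (z - t w)` is constant along `(t, 1)`. For `g u = u ^ d` the noncommutative binomial theorem
writes `(z - t w) ^ d` as a polynomial in `-t` of degree at most `d` whose coefficient of
`(-t) ^ q` is `S d (d - q)`. Interpolating at `d + 1` distinct values of `-t` gives weights, the
`q`-th coefficients of the Lagrange basis, which extract that coefficient.
-/

section WordSum

variable {R A : Type*} [CommSemiring R] [Semiring A] [Algebra R A]

/-- The sum of the noncommutative monomials of degree `p` in `z` and degree `d - p` in `w`, that is,
the polynomial `S d p` over an arbitrary semiring. It is `0` when `d < p`. -/
def wordSum (d p : ℕ) (z w : A) : A :=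
  ∑ α : Fin d → Bool with #{i | α i = true} = p, (List.ofFn fun i => if α i then z else w).prod

theorem S_eq_wordSum (d p : ℕ) (z w : Quaternion ℝ) : S d p z w = wordSum d p z w :=
  rfl

theorem add_pow_eq_sum_words (z w : A) (d : ℕ) :
    (z + w) ^ d = ∑ α : Fin d → Bool, (List.ofFn fun i => if α i then z else w).prod := by
  simpa using (MultilinearMap.mkPiAlgebraFin ℕ d A).map_sum fun _ (b : Bool) => if b then z else w

theorem prod_ofFn_ite_smul (s : R) (z w : A) {d : ℕ} (α : Fin d → Bool) :
    (List.ofFn fun i => if α i then z else s • w).prod =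
      s ^ (d - #{i | α i = true}) • (List.ofFn fun i => if α i then z else w).prod := by
  have hcard : #{i | ¬α i = true} = d - #{i | α i = true} := by
    have hsum := card_filter_add_card_filter_not (s := (univ : Finset (Fin d))) (α · = true)
    rw [card_fin] at hsum
    exact Nat.eq_sub_of_add_eq' hsum
  have hscalar : ∏ i, (if α i then 1 else s) = s ^ (d - #{i | α i = true}) := by
    rw [prod_ite, prod_const_one, one_mul, prod_const, hcard]
  have hfactor (i : Fin d) : (if α i then z else s • w) =
      (if α i then 1 else s) • if α i then z else w := by
    split_ifs <;> simp only [one_smul]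
  simp_rw [hfactor, ← hscalar]
  exact (MultilinearMap.mkPiAlgebraFin R d A).map_smul_univ _ _

theorem add_smul_pow_eq_sum_wordSum (s : R) (z w : A) (d : ℕ) :
    (z + s • w) ^ d = ∑ m ∈ range (d + 1), s ^ (d - m) • wordSum d m z w := by
  have hmaps (α : Fin d → Bool) (_ : α ∈ univ) : #{i | α i = true} ∈ range (d + 1) :=
    mem_range_succ_iff.2 <| card_finset_fin_le _
  simp_rw [add_pow_eq_sum_words, prod_ofFn_ite_smul, ← sum_fiberwise_of_maps_to hmaps, wordSum,
    smul_sum]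
  refine sum_congr rfl fun m _ => sum_congr rfl fun α hα => ?_
  rw [(mem_filter.1 hα).2]

end WordSum

section CoefficientExtraction

variable {ι K : Type*} [DecidableEq ι] [Field K] {s : Finset ι} {v : ι → K}

open Polynomial in
theorem sum_coeff_lagrangeBasis_mul_eval (hv : Set.InjOn v s) {f : K[X]} (hf : f.degree < #s)
    (q : ℕ) : ∑ i ∈ s, (Lagrange.basis s v i).coeff q * f.eval (v i) = f.coeff q := by
  conv_rhs => rw [Lagrange.eq_interpolate hv hf, Lagrange.interpolate_apply, finsetSum_coeff]
  simp_rw [coeff_C_mul, mul_comm]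

open Polynomial in
theorem sum_coeff_lagrangeBasis_smul_add_smul_pow {A : Type*} [Semiring A] [Algebra K A]
    (hv : Set.InjOn v s) {p q : ℕ} (hs : p + q < #s) (z w : A) :
    ∑ i ∈ s, (Lagrange.basis s v i).coeff q • (z + v i • w) ^ (p + q) = wordSum (p + q) p z w := by
  have hextract (m : ℕ) (hm : m ∈ range (p + q + 1)) :
      ∑ i ∈ s, (Lagrange.basis s v i).coeff q * v i ^ (p + q - m) = if m = p then 1 else 0 := by
    have hdegree : (X ^ (p + q - m) : K[X]).degree < #s :=
      (degree_X_pow_le _).trans_lt (by exact_mod_cast (Nat.sub_le _ _).trans_lt hs)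
    have hindex : q = p + q - m ↔ m = p := by grind
    simpa only [eval_pow, eval_X, coeff_X_pow, hindex] using
      sum_coeff_lagrangeBasis_mul_eval hv hdegree q
  calc
    _ = ∑ m ∈ range (p + q + 1), (∑ i ∈ s, (Lagrange.basis s v i).coeff q * v i ^ (p + q - m)) •
          wordSum (p + q) m z w := by
      simp_rw [add_smul_pow_eq_sum_wordSum, smul_sum, smul_smul, sum_smul]
      exact sum_comm
    _ = ∑ m ∈ range (p + q + 1), if m = p then wordSum (p + q) m z w else 0 :=
      sum_congr rfl fun m hm => by rw [hextract m hm, ite_smul, one_smul, zero_smul]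
    _ = wordSum (p + q) p z w := by
      rw [sum_ite_eq', if_pos (mem_range_succ_iff.2 (Nat.le_add_right p q))]

end CoefficientExtraction

section Divergence

variable {𝕜 A : Type*} [NontriviallyNormedField 𝕜]

section NormedSpace

variable [NormedAddCommGroup A] [NormedSpace 𝕜 A]

variable (𝕜) in
/-- The divergence of a vector field on `A × A`: the sum of the two partial Fréchet derivatives of
the corresponding components, as a linear map `A → A`. A partial derivative which does not exist
counts as `0`. -/
noncomputable def divergence (X : A × A → A × A) (x : A × A) : A →L[𝕜] A :=
  fderiv 𝕜 (fun z => (X (z, x.2)).1) x.1 + fderiv 𝕜 (fun w => (X (x.1, w)).2) x.2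

theorem divergence_apply_eq_fderiv {X : A × A → A × A} {x : A × A} (hX : DifferentiableAt 𝕜 X x)
    (h : A) : divergence 𝕜 X x h = (fderiv 𝕜 X x (h, 0)).1 + (fderiv 𝕜 X x (0, h)).2 := by
  have hz : HasFDerivAt (fun z => (X (z, x.2)).1) _ x.1 :=
    (HasFDerivAt.comp (f := (·, x.2)) x.1 hX.hasFDerivAt (hasFDerivAt_prodMk_left x.1 x.2)).fst
  have hw : HasFDerivAt (fun w => (X (x.1, w)).2) _ x.2 :=
    (HasFDerivAt.comp (f := (x.1, ·)) x.2 hX.hasFDerivAt (hasFDerivAt_prodMk_right x.1 x.2)).snd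
  exact congrArg₂ (· h + · h) hz.fderiv hw.fderiv

theorem divergence_sum_smul {ι : Type*} {s : Finset ι} {X : ι → A × A → A × A} {x : A × A}
    (hX : ∀ i ∈ s, DifferentiableAt 𝕜 (X i) x) (r : ι → 𝕜) :
    divergence 𝕜 (∑ i ∈ s, r i • X i) x = ∑ i ∈ s, r i • divergence 𝕜 (X i) x := by
  ext h
  have hsmul (i : ι) (hi : i ∈ s) : DifferentiableAt 𝕜 (r i • X i) x := (hX i hi).const_smul (r i)
  rw [divergence_apply_eq_fderiv (.sum hsmul), fderiv_sum hsmul]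
  simp only [_root_.sum_apply, Prod.fst_sum, Prod.snd_sum, ← sum_add_distrib]
  refine sum_congr rfl fun i hi => ?_
  rw [fderiv_const_smul (hX i hi)]
  simp [divergence_apply_eq_fderiv (hX i hi)]

theorem divergence_prodMk_smul {φ : A × A → A} {x : A × A} (hφ : DifferentiableAt 𝕜 φ x) (a b : 𝕜)
    (h : A) : divergence 𝕜 (fun y => (a • φ y, b • φ y)) x h = fderiv 𝕜 φ x (a • h, b • h) := by
  have hX : HasFDerivAt (fun y => (a • φ y, b • φ y)) _ x :=
    (hφ.hasFDerivAt.const_smul a).prodMk (hφ.hasFDerivAt.const_smul b)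
  rw [divergence_apply_eq_fderiv hX.differentiableAt, hX.fderiv]
  have hsplit : ((a • h, b • h) : A × A) = a • (h, 0) + b • (0, h) := by simp
  rw [hsplit, map_add, map_smul, map_smul]
  rfl

end NormedSpace

section Overshear

variable [NormedRing A] [NormedAlgebra 𝕜 A]

/-- The overshear vector field in the direction `(t, 1)` with profile `g`: the coefficient of the
constant field `(t, 1)` is `g (z - t • w)`, which is constant along that direction, times
`(t • z + w) / (t ^ 2 + 1)`, the coordinate along it. The field is `0` if `t ^ 2 + 1 = 0`. -/
def overshear (t : 𝕜) (g : A → A) (x : A × A) : A × A :=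
  ((t / (t ^ 2 + 1)) • ((t • x.1 + x.2) * g (x.1 - t • x.2)),
    (1 / (t ^ 2 + 1)) • ((t • x.1 + x.2) * g (x.1 - t • x.2)))

theorem differentiable_overshear (t : 𝕜) {g : A → A} (hg : Differentiable 𝕜 g) :
    Differentiable 𝕜 (overshear t g) := by
  unfold overshear
  fun_prop

theorem divergence_overshear {t : 𝕜} (ht : t ^ 2 + 1 ≠ 0) {g : A → A} {x : A × A}
    (hg : DifferentiableAt 𝕜 g (x.1 - t • x.2)) (h : A) :
    divergence 𝕜 (overshear t g) x h = h * g (x.1 - t • x.2) := by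
  have hprofile : HasFDerivAt (fun y : A × A => g (y.1 - t • y.2)) _ x :=
    hg.hasFDerivAt.comp x (hasFDerivAt_fst.sub (hasFDerivAt_snd.const_smul t))
  have hφ : HasFDerivAt (fun y : A × A => (t • y.1 + y.2) * g (y.1 - t • y.2)) _ x :=
    ((hasFDerivAt_fst.const_smul t).add hasFDerivAt_snd).mul' hprofile
  have hdirection : (t / (t ^ 2 + 1)) • h - t • (1 / (t ^ 2 + 1)) • h = 0 := by
    match_scalars
    ring
  have hcoordinate : t • (t / (t ^ 2 + 1)) • h + (1 / (t ^ 2 + 1)) • h = h := by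
    match_scalars
    field_simp
  unfold overshear
  rw [divergence_prodMk_smul hφ.differentiableAt, hφ.fderiv]
  change (t • x.1 + x.2) * fderiv 𝕜 g (x.1 - t • x.2)
      ((t / (t ^ 2 + 1)) • h - t • (1 / (t ^ 2 + 1)) • h) +
    (t • (t / (t ^ 2 + 1)) • h + (1 / (t ^ 2 + 1)) • h) * g (x.1 - t • x.2) = _
  rw [hdirection, hcoordinate, map_zero, mul_zero, zero_add]

theorem exists_overshear_sum_div_eq_S_general {ι : Type*} {s : Finset ι} {t : ι → 𝕜}
    (ht : Set.InjOn t s) (ht_sq : ∀ i ∈ s, t i ^ 2 + 1 ≠ 0) {p q : ℕ} (hs : p + q < #s) :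
    ∃ r : ι → 𝕜, ∀ (x : A × A) (h : A),
      divergence 𝕜 (∑ i ∈ s, r i • overshear (t i) (· ^ (p + q))) x h =
        h * wordSum (p + q) p x.1 x.2 := by
  classical
  have hnodes : Set.InjOn (-t) s := neg_injective.comp_injOn ht
  have hpow : Differentiable 𝕜 fun u : A => u ^ (p + q) := by fun_prop
  refine ⟨fun i => (Lagrange.basis s (-t) i).coeff q, fun x h => ?_⟩
  rw [divergence_sum_smul fun i _ => (differentiable_overshear (t i) hpow).differentiableAt,
    ← sum_coeff_lagrangeBasis_smul_add_smul_pow hnodes hs, mul_sum,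
    _root_.sum_apply]
  refine sum_congr rfl fun i hi => ?_
  rw [_root_.smul_apply, divergence_overshear (ht_sq i hi) hpow.differentiableAt,
    mul_smul_comm, Pi.neg_apply, neg_smul, sub_eq_add_neg]

end Overshear

end Divergence

/-- For each `p, q` there is a finite sum of overshear vector fields in the real
directions `(n,1)`, `n = 0, …, p+q`, whose divergence is `S_{p,q}(z,w)`. -/
theorem exists_overshear_sum_div_eq_S (p q : ℕ) :
    ∃ r : ℕ → ℝ, ∀ z w h : Quaternion ℝ,
      fderiv ℝ (fun z' => ∑ n ∈ Finset.range (p + q + 1),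
          (((n : ℝ) / ((n : ℝ) ^ 2 + 1)) •
              (((n : ℝ) • z' + w) * (z' - (n : ℝ) • w) ^ (p + q))) *
            ((r n : ℝ) : Quaternion ℝ)) z h
        + fderiv ℝ (fun w' => ∑ n ∈ Finset.range (p + q + 1),
          ((1 / ((n : ℝ) ^ 2 + 1)) •
              (((n : ℝ) • z + w') * (z - (n : ℝ) • w') ^ (p + q))) *
            ((r n : ℝ) : Quaternion ℝ)) w h
        = h * S (p + q) p z w := by
  obtain ⟨r, hr⟩ := exists_overshear_sum_div_eq_S_general (𝕜 := ℝ) (A := Quaternion ℝ)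
    (s := range (p + q + 1)) (t := Nat.cast) Nat.cast_injective.injOn (fun n _ => by positivity)
    (p := p) (q := q) (by simp)
  refine ⟨r, fun z w h => ?_⟩
  simp_rw [Quaternion.mul_coe_eq_smul, S_eq_wordSum]
  simpa only [divergence, overshear, Finset.sum_apply, Pi.smul_apply, Prod.fst_sum, Prod.snd_sum,
    Prod.smul_fst, Prod.smul_snd, _root_.add_apply] using hr (z, w) h
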